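/- In a simultaneous transition with n moving labels, at most 6n overlaps occur during the transition. -/

import Mathlib

open Set

/-- The closed axis-aligned unit square with lower-left corner `a`. -/
def unitSq (a : ℝ × ℝ) : Set (ℝ × ℝ) :=
  Set.Icc a.1 (a.1 + 1) ×ˢ Set.Icc a.2 (a.2 + 1)

/-- Two unit squares, given by their lower-left corners, overlap if their interiors intersect. -/
def Overlap (a b : ℝ × ℝ) : Prop :=
  (interior (unitSq a) ∩ interior (unitSq b)).Nonempty

/-- `a` is the lower-left corner of one of the four candidate positions of point `p`
(the four closed unit squares having `p` as a corner). -/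
def IsCandidate (p a : ℝ × ℝ) : Prop :=
  a = p ∨ a = (p.1 - 1, p.2) ∨ a = (p.1, p.2 - 1) ∨ a = (p.1 - 1, p.2 - 1)

/-- Two unit squares (given by lower-left corners) share an edge. -/
def SharesEdge (a b : ℝ × ℝ) : Prop :=
  (a.1 = b.1 ∧ (a.2 - b.2 = 1 ∨ b.2 - a.2 = 1)) ∨
  (a.2 = b.2 ∧ (a.1 - b.1 = 1 ∨ b.1 - a.1 = 1))

/-- A movement of the unit-square label of point `p` from candidate position `S` to candidate
position `E`.  If `S` and `E` share an edge (a non-diagonal movement) we set `I = E` and the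
label translates directly from `S` to `E`; if `S` and `E` are diagonally opposite (a diagonal
movement) the label translates through the specified intermediate candidate position `I`,
which shares an edge with both `S` and `E`. -/
structure Movement where
  p : ℝ × ℝ
  S : ℝ × ℝ
  I : ℝ × ℝ
  E : ℝ × ℝ
  candS : IsCandidate p S
  candI : IsCandidate p I
  candE : IsCandidate p E
  legs : (I = E ∧ SharesEdge S E) ∨
    (SharesEdge S I ∧ SharesEdge I E ∧ S.1 ≠ E.1 ∧ S.2 ≠ E.2)

/-- A movement is diagonal if the start and end positions are diagonally opposite
(equivalently, the intermediate position differs from the end position). -/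
def Movement.Diagonal (m : Movement) : Prop := m.I ≠ m.E

/-- Position (lower-left corner) of a moving label at time `t` after the start of its movement:
unit-speed axis-aligned translation, one unit of time per axis-aligned leg; the label rests at
its start position before the movement begins and at its end position after it is finished. -/
noncomputable def Movement.pos (m : Movement) (t : ℝ) : ℝ × ℝ :=
  if t ≤ 0 then m.S
  else if t ≤ 1 then m.S + t • (m.I - m.S)
  else if t ≤ 2 then m.I + (t - 1) • (m.E - m.I)
  else m.E

/-- Duration of a movement: one unit of time per axis-aligned translation. -/
noncomputable def Movement.dur (m : Movement) : ℝ := if m.I = m.E then 1 else 2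

/-- A transition instance: finitely many stationary labels (given by their lower-left corners)
and `n` moving labels, each with a prescribed movement, such that the labeling `L₁` formed by
the stationary labels together with the start positions of the moving labels is overlap-free,
and the labeling `L₂` formed by the stationary labels together with the end positions of the
moving labels is overlap-free. -/
structure TransitionInstance (k n : ℕ) where
  stat : Fin k → ℝ × ℝ
  mov : Fin n → Movement
  free_start : ∀ a b : Fin k ⊕ Fin n, a ≠ b →
    ¬ Overlap (Sum.elim stat (fun j => (mov j).S) a)
      (Sum.elim stat (fun j => (mov j).S) b)
  free_end : ∀ a b : Fin k ⊕ Fin n, a ≠ b →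
    ¬ Overlap (Sum.elim stat (fun j => (mov j).E) a)
      (Sum.elim stat (fun j => (mov j).E) b)

/-- A schedule `τ` of starting times is consecutive if the execution intervals of the movements
are pairwise non-overlapping, i.e. the movements are executed one after another in some order. -/
def Consecutive {k n : ℕ} (T : TransitionInstance k n) (τ : Fin n → ℝ) : Prop :=
  ∀ i j : Fin n, i ≠ j →
    τ i + (T.mov i).dur ≤ τ j ∨ τ j + (T.mov j).dur ≤ τ i

/-- Position (lower-left corner) of each label at global time `t`, when moving label `j`
starts its movement at time `τ j`; stationary labels never move. -/
noncomputable def traj {k n : ℕ} (T : TransitionInstance k n) (τ : Fin n → ℝ) (t : ℝ) :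
    Fin k ⊕ Fin n → ℝ × ℝ :=
  Sum.elim T.stat (fun j => (T.mov j).pos (t - τ j))

/-- The number of overlaps during the transition: the number of unordered pairs of distinct
labels whose interiors intersect at some moment. -/
noncomputable def overlapCount {k n : ℕ} (T : TransitionInstance k n) (τ : Fin n → ℝ) : ℕ :=
  Set.ncard {q : Sym2 (Fin k ⊕ Fin n) | ∃ a b : Fin k ⊕ Fin n,
    q = s(a, b) ∧ a ≠ b ∧ ∃ t : ℝ, Overlap (traj T τ t a) (traj T τ t b)}

/-!
Reading the second leg backwards in time, from the end positions, both legs start from an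
overlap-free labeling. During a leg, look at the other labels from a label `a` moving in direction
`d`, in the frame with origin `a` and first axis `d`, and locate their corners in the integer grid.
If two labels come to overlap, then either one of them is in one of the two cells directly in front
of the other, or each is in one of four outer cells of the other; in the latter case they overlap
when the leg ends, so the pair shows up in the other leg as well. Let `a` pay `4` for a label in a
front cell and `1` for a label in an outer cell. An overlap-free labeling has at most one corner per
cell, so `a` pays at most `2 * 4 + 4 * 1 = 12` per leg and `24` in total, whereas every overlapping
pair receives at least `4`.
-/

theorem Ioo_inter_Ioo_nonempty_iff_dist_lt {x y r : ℝ} :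
    (Ioo x (x + r) ∩ Ioo y (y + r)).Nonempty ↔ dist x y < r := by
  rw [Ioo_inter_Ioo, nonempty_Ioo, max_lt_iff, lt_min_iff, lt_min_iff, Real.dist_eq, abs_lt]
  grind

theorem overlap_iff_dist_lt_one {a b : ℝ × ℝ} : Overlap a b ↔ dist a b < 1 := by
  simp only [Overlap, unitSq, interior_prod_eq, interior_Icc, prod_inter_prod, prod_nonempty_iff,
    Ioo_inter_Ioo_nonempty_iff_dist_lt, Prod.dist_eq, max_lt_iff]

theorem overlap_comm {a b : ℝ × ℝ} : Overlap a b ↔ Overlap b a := by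
  rw [Overlap, inter_comm, Overlap]

theorem norm_prod_lt_iff {w : ℝ × ℝ} {r : ℝ} :
    ‖w‖ < r ↔ (-r < w.1 ∧ w.1 < r) ∧ (-r < w.2 ∧ w.2 < r) := by
  rw [Prod.norm_def, max_lt_iff, Real.norm_eq_abs, Real.norm_eq_abs, abs_lt, abs_lt]

/-- The four axis-parallel unit vectors: the velocities of a label in motion. -/
def IsAxisUnit (d : ℝ × ℝ) : Prop :=
  d = (1, 0) ∨ d = (-1, 0) ∨ d = (0, 1) ∨ d = (0, -1)

/-- The possible velocities of a label during a leg, rest included. -/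
def IsStep (d : ℝ × ℝ) : Prop := d = 0 ∨ IsAxisUnit d

theorem SharesEdge.symm {a b : ℝ × ℝ} (h : SharesEdge a b) : SharesEdge b a := by
  unfold SharesEdge at *
  grind

theorem SharesEdge.isAxisUnit_sub {a b : ℝ × ℝ} (h : SharesEdge a b) : IsAxisUnit (b - a) := by
  simp only [SharesEdge, IsAxisUnit, Prod.ext_iff, Prod.fst_sub, Prod.snd_sub] at *
  grind

/-- Coordinates of a vector in the positively oriented orthogonal frame with first vector `d`;
identically zero for `d = 0`, so that a label at rest sees nothing ahead. -/
def localCoord (d : ℝ × ℝ) : ℝ × ℝ →ₗ[ℝ] ℝ × ℝ where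
  toFun v := (d.1 * v.1 + d.2 * v.2, d.1 * v.2 - d.2 * v.1)
  map_add' v w := by ext <;> simp only [Prod.fst_add, Prod.snd_add] <;> ring
  map_smul' c v := by
    ext <;> simp only [Prod.smul_fst, Prod.smul_snd, smul_eq_mul, RingHom.id_apply] <;> ring

theorem localCoord_apply (d v : ℝ × ℝ) :
    localCoord d v = (d.1 * v.1 + d.2 * v.2, d.1 * v.2 - d.2 * v.1) := rfl

theorem localCoord_zero_left (v : ℝ × ℝ) : localCoord 0 v = 0 := by
  simp [localCoord_apply]

theorem localCoord_localCoord (d e v : ℝ × ℝ) :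
    localCoord (localCoord d e) (localCoord d v) = (d.1 ^ 2 + d.2 ^ 2) • localCoord e v := by
  ext <;> simp only [localCoord_apply, Prod.smul_fst, Prod.smul_snd, smul_eq_mul] <;> ring

namespace IsAxisUnit

variable {d : ℝ × ℝ}

theorem sq_add_sq (hd : IsAxisUnit d) : d.1 ^ 2 + d.2 ^ 2 = 1 := by
  rcases hd with rfl | rfl | rfl | rfl <;> norm_num

theorem localCoord_self (hd : IsAxisUnit d) : localCoord d d = (1, 0) := by
  rcases hd with rfl | rfl | rfl | rfl <;> simp [localCoord_apply]

theorem norm_localCoord (hd : IsAxisUnit d) (v : ℝ × ℝ) : ‖localCoord d v‖ = ‖v‖ := by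
  rcases hd with rfl | rfl | rfl | rfl <;> simp [localCoord_apply, Prod.norm_def, max_comm]

theorem isStep_localCoord {e : ℝ × ℝ} (hd : IsAxisUnit d) (he : IsStep e) :
    IsStep (localCoord d e) := by
  rcases he with rfl | he
  · exact .inl (map_zero _)
  · refine .inr ?_
    rcases hd with rfl | rfl | rfl | rfl <;> rcases he with rfl | rfl | rfl | rfl <;>
      simp [localCoord_apply, IsAxisUnit]

end IsAxisUnit

/-- The cell of the half-open unit grid that contains `w`. -/
noncomputable def gridCell (w : ℝ × ℝ) : ℤ × ℤ := (⌊w.1⌋, ⌊w.2⌋)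

/-- The cells directly in front of a label at the origin that moves in direction `(1, 0)`. -/
def frontCells : Finset (ℤ × ℤ) := {(1, -1), (1, 0)}

/-- The remaining cells from which a moving label can reach a label that starts at the origin and
moves in direction `(1, 0)`: those diagonally ahead, for crossing directions, and those one further
ahead, for opposite directions. -/
def outerCells : Finset (ℤ × ℤ) := {(1, -2), (1, 1), (2, -1), (2, 0)}

theorem gridCell_mem_frontCells {w : ℝ × ℝ} :
    gridCell w ∈ frontCells ↔ (1 ≤ w.1 ∧ w.1 < 2) ∧ (-1 ≤ w.2 ∧ w.2 < 1) := by
  simp only [gridCell, frontCells, Finset.mem_insert, Finset.mem_singleton, Prod.mk.injEq,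
    Int.floor_eq_iff]
  push_cast
  grind

theorem gridCell_mem_outerCells {w : ℝ × ℝ} :
    gridCell w ∈ outerCells ↔
      ((1 ≤ w.1 ∧ w.1 < 2) ∧ ((-2 ≤ w.2 ∧ w.2 < -1) ∨ (1 ≤ w.2 ∧ w.2 < 2))) ∨
        ((2 ≤ w.1 ∧ w.1 < 3) ∧ (-1 ≤ w.2 ∧ w.2 < 1)) := by
  simp only [gridCell, outerCells, Finset.mem_insert, Finset.mem_singleton, Prod.mk.injEq,
    Int.floor_eq_iff]
  push_cast
  grind

theorem dist_lt_one_of_gridCell_eq {v w : ℝ × ℝ} (h : gridCell v = gridCell w) :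
    dist v w < 1 := by
  rw [gridCell, gridCell, Prod.mk.injEq] at h
  rw [Prod.dist_eq, max_lt_iff]
  exact ⟨Int.abs_sub_lt_one_of_floor_eq_floor h.1, Int.abs_sub_lt_one_of_floor_eq_floor h.2⟩

/-- The relative positions from which two labels can come to overlap during a leg: the labels have
velocities `d` and `e`, and the second one starts at displacement `v` from the first. Either one of
them is directly in front of the other, or each is in an outer cell of the other and they overlap
when the leg ends. -/
def FrontOrOuter (d e v : ℝ × ℝ) : Prop :=
  gridCell (localCoord d v) ∈ frontCells ∨ gridCell (localCoord e (-v)) ∈ frontCells ∨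
    (gridCell (localCoord d v) ∈ outerCells ∧ gridCell (localCoord e (-v)) ∈ outerCells ∧
      ‖v + (e - d)‖ < 1)

section FrontOrOuter

variable {d e v : ℝ × ℝ} {t : ℝ}

theorem FrontOrOuter.symm (h : FrontOrOuter d e v) : FrontOrOuter e d (-v) := by
  have hend : ‖-v + (d - e)‖ = ‖v + (e - d)‖ := by
    rw [← neg_sub e d, ← neg_add, norm_neg]
  unfold FrontOrOuter at *
  rw [neg_neg, hend]
  tauto

theorem FrontOrOuter.of_localCoord (hd : IsAxisUnit d)
    (h : FrontOrOuter (1, 0) (localCoord d e) (localCoord d v)) : FrontOrOuter d e v := by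
  have hrot (f w : ℝ × ℝ) : localCoord (localCoord d f) (localCoord d w) = localCoord f w := by
    rw [localCoord_localCoord, hd.sq_add_sq, one_smul]
  rwa [FrontOrOuter, ← hd.localCoord_self, ← map_neg, ← map_sub, ← map_add, hrot, hrot,
    hd.norm_localCoord] at h

theorem frontOrOuter_of_rest (hv : 1 ≤ ‖v‖) (ht : t ∈ Icc (0 : ℝ) 1)
    (h : ‖v + t • (0 - (1, 0) : ℝ × ℝ)‖ < 1) : FrontOrOuter (1, 0) 0 v := by
  left
  rw [← not_lt, norm_prod_lt_iff] at hv
  simp only [gridCell_mem_frontCells, norm_prod_lt_iff, localCoord_apply, Prod.fst_add,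
    Prod.snd_add, Prod.smul_fst, Prod.smul_snd, Prod.fst_sub, Prod.snd_sub, Prod.fst_zero,
    Prod.snd_zero, smul_eq_mul] at h ⊢
  grind

theorem frontOrOuter_of_opposite (hv : 1 ≤ ‖v‖) (ht : t ∈ Icc (0 : ℝ) 1)
    (h : ‖v + t • ((-1, 0) - (1, 0) : ℝ × ℝ)‖ < 1) : FrontOrOuter (1, 0) (-1, 0) v := by
  rw [← not_lt, norm_prod_lt_iff] at hv
  -- The distance ahead is in `[1, 3)`; from `[2, 3)` it drops to `[0, 1)` at the end of the leg.
  simp only [FrontOrOuter, norm_prod_lt_iff, gridCell_mem_frontCells, gridCell_mem_outerCells,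
    localCoord_apply, Prod.fst_add, Prod.snd_add, Prod.smul_fst, Prod.smul_snd, Prod.fst_sub,
    Prod.snd_sub, Prod.fst_neg, Prod.snd_neg, smul_eq_mul] at h ⊢
  grind

theorem frontOrOuter_of_crossing (he : e = (0, 1) ∨ e = (0, -1)) (hv : 1 ≤ ‖v‖)
    (ht : t ∈ Icc (0 : ℝ) 1) (h : ‖v + t • (e - (1, 0))‖ < 1) : FrontOrOuter (1, 0) e v := by
  rw [← not_lt, norm_prod_lt_iff] at hv
  -- If neither label is in front of the other, then each is at distance in `[1, 2)` along both
  -- axes, and both distances have dropped below `1` at the end of the leg.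
  simp only [FrontOrOuter, norm_prod_lt_iff, gridCell_mem_frontCells, gridCell_mem_outerCells,
    localCoord_apply, Prod.fst_add, Prod.snd_add, Prod.smul_fst, Prod.smul_snd, Prod.fst_sub,
    Prod.snd_sub, Prod.fst_neg, Prod.snd_neg, smul_eq_mul] at h ⊢
  rcases he with rfl | rfl <;> grind

theorem IsAxisUnit.frontOrOuter (hd : IsAxisUnit d) (he : IsStep e) (hv : 1 ≤ ‖v‖)
    (ht : t ∈ Icc (0 : ℝ) 1) (h : ‖v + t • (e - d)‖ < 1) : FrontOrOuter d e v := by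
  apply FrontOrOuter.of_localCoord hd
  rw [← hd.norm_localCoord] at hv
  rw [← hd.norm_localCoord, map_add, map_smul, map_sub, hd.localCoord_self] at h
  rcases hd.isStep_localCoord he with he' | he' | he' | he'
  · rw [he'] at h ⊢
    exact frontOrOuter_of_rest hv ht h
  · rw [he', sub_self, smul_zero, add_zero] at h
    exact absurd hv h.not_ge
  · rw [he'] at h ⊢
    exact frontOrOuter_of_opposite hv ht h
  · exact frontOrOuter_of_crossing he' hv ht h

theorem IsStep.frontOrOuter (hd : IsStep d) (he : IsStep e) (hv : 1 ≤ ‖v‖)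
    (ht : t ∈ Icc (0 : ℝ) 1) (h : ‖v + t • (e - d)‖ < 1) : FrontOrOuter d e v := by
  rcases hd with rfl | hd
  · rcases he with rfl | he
    · rw [sub_self, smul_zero, add_zero] at h
      exact absurd hv h.not_ge
    · have hswap : -v + t • (0 - e) = -(v + t • (e - 0)) := by module
      rw [← norm_neg, ← hswap] at h
      rw [← norm_neg] at hv
      simpa only [neg_neg] using (he.frontOrOuter (.inl rfl) hv ht h).symm
  · exact hd.frontOrOuter he hv ht h

end FrontOrOuter

/-- What a label pays for another label in a given cell of its frame. -/
def cellCharge (c : ℤ × ℤ) : ℕ :=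
  if c ∈ frontCells then 4 else if c ∈ outerCells then 1 else 0

theorem cellCharge_of_mem_frontCells {c : ℤ × ℤ} (hc : c ∈ frontCells) : cellCharge c = 4 :=
  if_pos hc

theorem one_le_cellCharge_of_mem_outerCells {c : ℤ × ℤ} (hc : c ∈ outerCells) :
    1 ≤ cellCharge c := by
  unfold cellCharge
  split_ifs <;> norm_num

theorem sum_comp_le_sum_of_injective {ι κ M : Type*} [Fintype ι] [AddCommMonoid M]
    [Preorder M] [CanonicallyOrderedAdd M] {g : ι → κ} (hg : g.Injective) {f : κ → M}
    {s : Finset κ} (hs : ∀ c, f c ≠ 0 → c ∈ s) : ∑ i, f (g i) ≤ ∑ c ∈ s, f c := by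
  classical
  rw [← Finset.sum_image (f := f) hg.injOn]
  exact Finset.sum_le_sum_of_ne_zero fun c _ => hs c

theorem sum_cellCharge_le {ι : Type*} [Fintype ι] {g : ι → ℤ × ℤ} (hg : g.Injective) :
    ∑ i, cellCharge (g i) ≤ 12 := by
  have hsupp : ∀ c, cellCharge c ≠ 0 → c ∈ frontCells ∪ outerCells := fun c hc => by
    rw [Finset.mem_union]
    unfold cellCharge at hc
    grind
  calc
    ∑ i, cellCharge (g i) ≤ ∑ c ∈ frontCells ∪ outerCells, cellCharge c :=
      sum_comp_le_sum_of_injective hg hsupp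
    _ = 12 := by decide

section Leg

variable {V : Type*} {s m : V → ℝ × ℝ}

/-- What `a` pays for `b` during the leg that takes each label `v` from `s v` to `m v`. -/
noncomputable def legCharge (s m : V → ℝ × ℝ) (a b : V) : ℕ :=
  cellCharge (gridCell (localCoord (m a - s a) (s b - s a)))

theorem legCharge_eq_zero {a : V} (ha : m a = s a) (b : V) : legCharge s m a b = 0 := by
  simp [legCharge, ha, localCoord_zero_left, gridCell, cellCharge, frontCells, outerCells]

theorem sum_legCharge_le [Fintype V] (hs : Pairwise fun a b => 1 ≤ dist (s a) (s b)) {a : V}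
    (ha : IsStep (m a - s a)) : ∑ b, legCharge s m a b ≤ 12 := by
  rcases ha with ha | ha
  · simp [legCharge_eq_zero (sub_eq_zero.mp ha)]
  · refine sum_cellCharge_le fun b c hbc => by_contra fun hne => (hs hne).not_gt ?_
    have hlt := dist_lt_one_of_gridCell_eq hbc
    rwa [dist_eq_norm, ← map_sub, ha.norm_localCoord, sub_sub_sub_cancel_right,
      ← dist_eq_norm] at hlt

theorem legCharge_of_dist_lineMap_lt {a b : V} (ha : IsStep (m a - s a)) (hb : IsStep (m b - s b))
    (hab : 1 ≤ dist (s a) (s b)) {t : ℝ} (ht : t ∈ Icc (0 : ℝ) 1)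
    (h : dist (AffineMap.lineMap (s a) (m a) t) (AffineMap.lineMap (s b) (m b) t) < 1) :
    4 ≤ legCharge s m a b + legCharge s m b a ∨
      (2 ≤ legCharge s m a b + legCharge s m b a ∧ dist (m a) (m b) < 1) := by
  have hrel : ‖(s b - s a) + t • ((m b - s b) - (m a - s a))‖ < 1 := by
    have hsub : AffineMap.lineMap (s b) (m b) t - AffineMap.lineMap (s a) (m a) t =
        (s b - s a) + t • ((m b - s b) - (m a - s a)) := by
      simp only [AffineMap.lineMap_apply_module']
      module
    rwa [dist_comm, dist_eq_norm, hsub] at h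
  rw [dist_comm, dist_eq_norm] at hab
  unfold legCharge
  rw [← neg_sub (s b) (s a)]
  rcases ha.frontOrOuter hb hab ht hrel with hfront | hfront | ⟨houter_a, houter_b, hend⟩
  · have := cellCharge_of_mem_frontCells hfront
    omega
  · have := cellCharge_of_mem_frontCells hfront
    omega
  · have hend' : dist (m a) (m b) < 1 := by
      have hsub : s b - s a + ((m b - s b) - (m a - s a)) = m b - m a := by abel
      rwa [hsub, ← dist_eq_norm, dist_comm] at hend
    have := one_le_cellCharge_of_mem_outerCells houter_a
    have := one_le_cellCharge_of_mem_outerCells houter_b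
    exact .inr ⟨by omega, hend'⟩

theorem two_le_legCharge_of_dist_lt {a b : V} (ha : IsStep (m a - s a)) (hb : IsStep (m b - s b))
    (hab : 1 ≤ dist (s a) (s b)) (h : dist (m a) (m b) < 1) :
    2 ≤ legCharge s m a b + legCharge s m b a := by
  have := legCharge_of_dist_lineMap_lt ha hb hab (right_mem_Icc.mpr zero_le_one)
    (by simpa only [AffineMap.lineMap_apply_one] using h)
  omega

end Leg

theorem mul_ncard_edgeSet_le_sum {V : Type*} [Fintype V] (G : SimpleGraph V) {c : ℕ}
    {f : V → V → ℕ} (hf : ∀ a b, G.Adj a b → c ≤ f a b + f b a) :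
    c * G.edgeSet.ncard ≤ ∑ a, ∑ b, f a b := by
  classical
  have hdouble : c * (2 * G.edgeSet.ncard) ≤ ∑ a, ∑ b, (f a b + f b a) := by
    rw [← SimpleGraph.coe_edgeFinset, ncard_coe_finset, G.two_mul_card_edgeFinset,
      ← Fintype.sum_prod_type', Finset.card_filter, Finset.mul_sum]
    refine Finset.sum_le_sum fun p _ => ?_
    split_ifs with hp
    · simpa only [mul_one] using hf p.1 p.2 hp
    · simp only [mul_zero, zero_le]
  have hswap : ∑ a, ∑ b, f b a = ∑ a, ∑ b, f a b := Finset.sum_comm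
  simp only [Finset.sum_add_distrib, hswap] at hdouble
  linarith

namespace Movement

variable (M : Movement)

theorem isStep_mid_sub_start : IsStep (M.I - M.S) := by
  rcases M.legs with ⟨hIE, h⟩ | ⟨h, -⟩
  · exact .inr (hIE ▸ h.isAxisUnit_sub)
  · exact .inr h.isAxisUnit_sub

theorem isStep_mid_sub_end : IsStep (M.I - M.E) := by
  rcases M.legs with ⟨hIE, -⟩ | ⟨-, h, -⟩
  · exact .inl (sub_eq_zero.mpr hIE)
  · exact .inr h.symm.isAxisUnit_sub

theorem pos_of_le_one {t : ℝ} (ht : t ≤ 1) :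
    M.pos t = AffineMap.lineMap M.S M.I (max t 0) := by
  rcases le_or_gt t 0 with h0 | h0
  · simp [pos, h0]
  · simp [pos, h0.not_ge, ht, h0.le, AffineMap.lineMap_apply_module', add_comm]

theorem pos_of_one_lt {t : ℝ} (ht : 1 < t) :
    M.pos t = AffineMap.lineMap M.E M.I (max (2 - t) 0) := by
  have h0 : ¬ t ≤ 0 := by linarith
  rcases le_or_gt t 2 with h2 | h2
  · rw [pos, if_neg h0, if_neg ht.not_ge, if_pos h2, max_eq_left (sub_nonneg.mpr h2),
      AffineMap.lineMap_apply_module']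
    module
  · rw [pos, if_neg h0, if_neg ht.not_ge, if_neg h2.not_ge, max_eq_right (by linarith),
      AffineMap.lineMap_apply_zero]

end Movement

namespace TransitionInstance

variable {k n : ℕ} (T : TransitionInstance k n)

/-- The labeling `L₁`. -/
def startPos : Fin k ⊕ Fin n → ℝ × ℝ := Sum.elim T.stat fun j => (T.mov j).S

/-- The labeling at time `1`, when the first legs are completed. -/
def midPos : Fin k ⊕ Fin n → ℝ × ℝ := Sum.elim T.stat fun j => (T.mov j).I

/-- The labeling `L₂`. -/
def endPos : Fin k ⊕ Fin n → ℝ × ℝ := Sum.elim T.stat fun j => (T.mov j).E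

theorem one_le_dist_startPos : Pairwise fun a b => 1 ≤ dist (T.startPos a) (T.startPos b) :=
  fun a b hab => not_lt.mp (mt overlap_iff_dist_lt_one.mpr (T.free_start a b hab))

theorem one_le_dist_endPos : Pairwise fun a b => 1 ≤ dist (T.endPos a) (T.endPos b) :=
  fun a b hab => not_lt.mp (mt overlap_iff_dist_lt_one.mpr (T.free_end a b hab))

theorem isStep_midPos_sub_startPos : ∀ a, IsStep (T.midPos a - T.startPos a)
  | .inl _ => .inl (sub_self _)
  | .inr j => (T.mov j).isStep_mid_sub_start

theorem isStep_midPos_sub_endPos : ∀ a, IsStep (T.midPos a - T.endPos a)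
  | .inl _ => .inl (sub_self _)
  | .inr j => (T.mov j).isStep_mid_sub_end

theorem traj_of_le_one {t : ℝ} (ht : t ≤ 1) (a : Fin k ⊕ Fin n) :
    traj T (fun _ => 0) t a = AffineMap.lineMap (T.startPos a) (T.midPos a) (max t 0) := by
  rcases a with i | j
  · simp [traj, startPos, midPos]
  · simpa [traj, startPos, midPos] using (T.mov j).pos_of_le_one ht

theorem traj_of_one_lt {t : ℝ} (ht : 1 < t) (a : Fin k ⊕ Fin n) :
    traj T (fun _ => 0) t a = AffineMap.lineMap (T.endPos a) (T.midPos a) (max (2 - t) 0) := by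
  rcases a with i | j
  · simp [traj, endPos, midPos]
  · simpa [traj, endPos, midPos] using (T.mov j).pos_of_one_lt ht

/-- What `a` pays for `b` during the whole simultaneous transition; the second leg is read backwards
in time. -/
noncomputable def charge (a b : Fin k ⊕ Fin n) : ℕ :=
  legCharge T.startPos T.midPos a b + legCharge T.endPos T.midPos a b

theorem four_le_charge_add_charge {a b : Fin k ⊕ Fin n} (hab : a ≠ b) {t : ℝ}
    (h : Overlap (traj T (fun _ => 0) t a) (traj T (fun _ => 0) t b)) :
    4 ≤ T.charge a b + T.charge b a := by
  have hS := T.isStep_midPos_sub_startPos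
  have hE := T.isStep_midPos_sub_endPos
  have hfreeS := T.one_le_dist_startPos hab
  have hfreeE := T.one_le_dist_endPos hab
  have hmid (hm : dist (T.midPos a) (T.midPos b) < 1) : 4 ≤ T.charge a b + T.charge b a := by
    have := two_le_legCharge_of_dist_lt (hS a) (hS b) hfreeS hm
    have := two_le_legCharge_of_dist_lt (hE a) (hE b) hfreeE hm
    unfold charge
    omega
  rw [overlap_iff_dist_lt_one] at h
  rcases le_or_gt t 1 with ht | ht
  · rw [T.traj_of_le_one ht, T.traj_of_le_one ht] at h
    have hu : max t 0 ∈ Icc (0 : ℝ) 1 := ⟨le_max_right _ _, max_le ht zero_le_one⟩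
    rcases legCharge_of_dist_lineMap_lt (hS a) (hS b) hfreeS hu h with hleg | ⟨-, hm⟩
    · unfold charge
      omega
    · exact hmid hm
  · rw [T.traj_of_one_lt ht, T.traj_of_one_lt ht] at h
    have hu : max (2 - t) 0 ∈ Icc (0 : ℝ) 1 :=
      ⟨le_max_right _ _, max_le (by linarith) zero_le_one⟩
    rcases legCharge_of_dist_lineMap_lt (hE a) (hE b) hfreeE hu h with hleg | ⟨-, hm⟩
    · unfold charge
      omega
    · exact hmid hm

theorem charge_inl (i : Fin k) (b : Fin k ⊕ Fin n) : T.charge (.inl i) b = 0 := by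
  have hS : T.midPos (.inl i) = T.startPos (.inl i) := rfl
  have hE : T.midPos (.inl i) = T.endPos (.inl i) := rfl
  rw [charge, legCharge_eq_zero hS, legCharge_eq_zero hE]

theorem sum_charge_le (a : Fin k ⊕ Fin n) : ∑ b, T.charge a b ≤ 24 := by
  have := sum_legCharge_le T.one_le_dist_startPos (T.isStep_midPos_sub_startPos a)
  have := sum_legCharge_le T.one_le_dist_endPos (T.isStep_midPos_sub_endPos a)
  simp only [charge, Finset.sum_add_distrib]
  omega

theorem sum_sum_charge_le : ∑ a, ∑ b, T.charge a b ≤ n * 24 := by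
  rw [Fintype.sum_sum_type]
  simp only [charge_inl, Finset.sum_const_zero, zero_add]
  simpa using Finset.sum_le_card_nsmul Finset.univ _ 24 fun j _ => T.sum_charge_le (.inr j)

/-- The graph of the pairs of labels that overlap at some moment under the schedule `τ`. -/
def overlapGraph (τ : Fin n → ℝ) : SimpleGraph (Fin k ⊕ Fin n) where
  Adj a b := a ≠ b ∧ ∃ t : ℝ, Overlap (traj T τ t a) (traj T τ t b)
  symm := ⟨fun _ _ h => ⟨h.1.symm, h.2.imp fun _ => overlap_comm.mp⟩⟩
  loopless := ⟨fun _ h => h.1 rfl⟩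

theorem overlapCount_eq_ncard_edgeSet (τ : Fin n → ℝ) :
    overlapCount T τ = (T.overlapGraph τ).edgeSet.ncard := by
  unfold overlapCount
  congr 1
  ext q
  constructor
  · rintro ⟨a, b, rfl, hab⟩
    exact hab
  · induction q with | _ a b => exact fun hab => ⟨a, b, rfl, hab⟩

end TransitionInstance

/-- In a simultaneous transition (all movements start at time `0`) with `n` moving labels,
at most `6 n` overlaps occur during the transition. -/
theorem simultaneous_overlaps_le {k n : ℕ} (T : TransitionInstance k n) :
    overlapCount T (fun _ => 0) ≤ 6 * n := by
  have hdischarge : 4 * overlapCount T (fun _ => 0) ≤ ∑ a, ∑ b, T.charge a b := by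
    rw [T.overlapCount_eq_ncard_edgeSet]
    exact mul_ncard_edgeSet_le_sum _ fun a b ⟨hab, _, ht⟩ => T.four_le_charge_add_charge hab ht
  have htotal : ∑ a, ∑ b, T.charge a b ≤ n * 24 := T.sum_sum_charge_le
  omega
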